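/- Let e ≥ 3 be odd and let f : F_q → F_p belong to the class RF with sign ε. If ε(η_0(−1))^{(e+1)/2} = 1, then the code C_f' generated by the rows of [I_{e+2} | G_2] has length p^e + e + 2, dimension e + 2, and minimum distance p^e − p^{e−1} − p^{(e−1)/2} + 1. If ε(η_0(−1))^{(e+1)/2} = −1, then C_f' has length p^e + e + 2, dimension e + 2, and minimum distance p^e − p^{e−1} − p^{(e−1)/2} + 2. In both cases, the dual (C_f')^⊥ has length p^e + e + 2, dimension p^e, and minimum distance 3. -/

import Mathlib

open scoped Classical

noncomputable section

/-- The complex primitive `p`-th root of unity `ζ_p = exp(2πi/p)`. -/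
def zetapc (p : ℕ) : ℂ := Complex.exp (2 * Real.pi * Complex.I / p)

/-- `√p* = i^{((p-1)/2)²} √p`, a square root of `p* = (-1)^{(p-1)/2} p`. -/
def sqrtpstar (p : ℕ) : ℂ := Complex.I ^ (((p - 1) / 2) ^ 2) * (Real.sqrt p : ℂ)

/-- The quadratic character of a finite field: `1` on nonzero squares, `-1` on
nonsquares, `0` at `0`. -/
def qchar (F : Type*) [MonoidWithZero F] : F → ℤ :=
  fun y => if y = 0 then 0 else if IsSquare y then 1 else -1

/-- `f : F_q → F_p` belongs to the class `RF` of weakly regular bent functions,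
with sign `ε` and dual `fstar`. -/
structure IsRF (p e : ℕ) (Fq : Type*) [Field Fq] [Fintype Fq] [Algebra (ZMod p) Fq]
    (f : Fq → ZMod p) (ε : ℤ) (fstar : Fq → ZMod p) : Prop where
  sign : ε = 1 ∨ ε = -1
  map_zero : f 0 = 0
  hom : ∃ h : ℕ, Even h ∧ 0 < h ∧ Nat.gcd (h - 1) (p - 1) = 1 ∧
    ∀ a : ZMod p, a ≠ 0 → ∀ x : Fq,
      f (algebraMap (ZMod p) Fq a * x) = a ^ h * f x
  walsh : ∀ β : Fq,
    (∑ x : Fq, zetapc p ^ (f x - Algebra.trace (ZMod p) Fq (β * x)).val)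
      = (ε : ℂ) * sqrtpstar p ^ e * zetapc p ^ (fstar β).val

/-- The dual code under the standard inner product. -/
def dualCode {ι F : Type*} [Fintype ι] [CommRing F] (C : Set (ι → F)) : Set (ι → F) :=
  {u | ∀ v ∈ C, ∑ i, u i * v i = 0}

/-- `d` is the minimum distance of the code `C`: the smallest Hamming weight of a
nonzero codeword. -/
def IsMinDist {ι F : Type*} [Fintype ι] [CommRing F] (C : Set (ι → F)) (d : ℕ) : Prop :=
  (∃ c ∈ C, c ≠ 0 ∧ hammingNorm c = d) ∧ ∀ c ∈ C, c ≠ 0 → d ≤ hammingNorm c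

/-- The code generated by the rows of the block matrix `[I_k | G]`. -/
def genCode {ι F : Type*} [Fintype ι] [CommRing F] (k : ℕ) (G : Fin k → ι → F) :
    Set ((Fin k ⊕ ι) → F) :=
  {w | ∃ v : Fin k → F, w = Sum.elim v fun d => ∑ j, v j * G j d}

open Polynomial in
/-- Euler operator `X d/dX`. -/
def thetaOp (R : Type) [CommRing R] : Module.End R R[X] :=
  (LinearMap.mulLeft R (X : R[X])) ∘ₗ (derivative : R[X] →ₗ[R] R[X])

open Polynomial in
lemma thetaOp_apply (R : Type) [CommRing R] (Q : R[X]) : thetaOp R Q = X * derivative Q := rfl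

open Polynomial in
lemma thetaOp_pow_X (R : Type) [CommRing R] (m j : ℕ) :
    ((thetaOp R) ^ m) (X ^ j) = (j : R) ^ m • (X ^ j : R[X]) := by
  induction m with
  | zero => simp
  | succ m ih =>
    rw [pow_succ', Module.End.mul_apply, ih, map_smul, thetaOp_apply, derivative_X_pow, pow_succ,
      mul_smul]
    congr 1
    rcases j with _ | j
    · simp
    · simp [smul_eq_C_mul]; ring

open Polynomial in
lemma thetaOp_pow_eval (R : Type) [CommRing R] (m : ℕ) (Q : R[X]) :
    (((thetaOp R) ^ m) ((X - 1) ^ m * Q)).eval 1 = (m.factorial : R) * Q.eval 1 := by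
  induction m generalizing Q with
  | zero => simp
  | succ m ih =>
    have : thetaOp R ((X - 1) ^ (m + 1) * Q)
        = (X - 1) ^ m * (X * (((m + 1 : ℕ) : R[X]) * Q + (X - 1) * derivative Q)) := by
      rw [thetaOp_apply, derivative_mul, derivative_pow_succ]
      simp
      ring
    rw [pow_succ, Module.End.mul_apply, this, ih, Nat.factorial_succ]
    simp
    ring

open Polynomial in
lemma thetaOp_vanish (p m : ℕ) [Fact p.Prime] (hm : m + 1 < p) (F : ℤ[X])
    (hF : aeval (zetapc p) F = 0) :
    (((thetaOp (ZMod p)) ^ m) (F.map (Int.castRingHom (ZMod p)))).eval 1 = 0 := by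
  have hp : p.Prime := Fact.out
  have hprim : IsPrimitiveRoot (zetapc p) p := Complex.isPrimitiveRoot_exp p hp.ne_zero
  have hd : cyclotomic p ℤ ∣ F := by
    rw [cyclotomic_eq_minpoly hprim hp.pos]
    exact minpoly.isIntegrallyClosed_dvd (hprim.isIntegral hp.pos) hF
  obtain ⟨g, rfl⟩ := hd
  have hc : cyclotomic p (ZMod p) = (X - 1) ^ (p - 1) := by
    have h1 := cyclotomic_prime_mul_X_sub_one (ZMod p) p
    have h2 : (X - 1 : (ZMod p)[X]) ^ p = X ^ p - 1 := by
      rw [sub_pow_char, one_pow]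
    rw [← h2] at h1
    have h3 : (X - 1 : (ZMod p)[X]) ≠ 0 := by
      have := X_sub_C_ne_zero (1 : ZMod p)
      simpa using this
    apply mul_right_cancel₀ h3
    rw [h1, ← pow_succ]
    congr 1
    have := hp.pos
    omega
  rw [Polynomial.map_mul, map_cyclotomic, hc]
  obtain ⟨r, hr⟩ : ∃ r, p - 1 = m + (r + 1) := ⟨p - 1 - m - 1, by omega⟩
  rw [hr, pow_add, mul_assoc, thetaOp_pow_eval]
  simp

lemma fact_sq (p m : ℕ) [Fact p.Prime] (hm : p = 2 * m + 1) :
    ((m.factorial : ZMod p)) * m.factorial * (-1) ^ m = -1 := by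
  have h := ZMod.wilsons_lemma p
  have hp0 : (2 * m + 1 : ZMod p) = 0 := by
    have : ((2 * m + 1 : ℕ) : ZMod p) = 0 := by rw [← hm]; simp
    exact_mod_cast this
  have e1 : p - 1 = m + m := by omega
  have key : ((∏ i ∈ Finset.range m, (m + i + 1) : ℕ) : ZMod p)
      = (-1) ^ m * (m.factorial : ZMod p) := by
    rw [← Finset.prod_range_add_one_eq_factorial, ← Finset.prod_range_reflect]
    push_cast
    rw [show ((-1 : ZMod p)) ^ m = ∏ i ∈ Finset.range m, (-1 : ZMod p) by simp,
      ← Finset.prod_mul_distrib]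
    apply Finset.prod_congr rfl
    intro i hi
    have hi' := Finset.mem_range.1 hi
    have : ((m - 1 - i : ℕ) : ZMod p) = m - 1 - i := by
      rw [Nat.cast_sub (by omega), Nat.cast_sub (by omega)]; simp
    rw [this]
    linear_combination hp0
  rw [e1, ← Finset.prod_range_add_one_eq_factorial, Finset.prod_range_add,
    Finset.prod_range_add_one_eq_factorial, Nat.cast_mul, key] at h
  linear_combination h

lemma qchar_eq (p : ℕ) [Fact p.Prime] (a : ZMod p) :
    qchar (ZMod p) a = quadraticChar (ZMod p) a := by
  rw [quadraticChar_apply, quadraticCharFun, qchar]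
  split_ifs <;> rfl

lemma prim_zetapc (p : ℕ) [Fact p.Prime] : IsPrimitiveRoot (zetapc p) p :=
  Complex.isPrimitiveRoot_exp p (Fact.out : p.Prime).ne_zero

lemma std_eq (p : ℕ) [Fact p.Prime] (j : ZMod p) :
    ZMod.stdAddChar j = zetapc p ^ j.val := by
  have := ZMod.stdAddChar_coe (N := p) (j.val : ℤ)
  rw [show (((j.val : ℤ)) : ZMod p) = j by simp] at this
  rw [this, zetapc, ← Complex.exp_nat_mul]
  congr 1
  push_cast
  ring

lemma one_sub_zeta_norm (p k : ℕ) [Fact p.Prime] (hk : k ≤ p) :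
    ‖1 - zetapc p ^ k‖ = 2 * Real.sin (Real.pi * k / p) := by
  have hp : (0 : ℝ) < p := by exact_mod_cast (Fact.out : p.Prime).pos
  rw [zetapc, ← Complex.exp_nat_mul, norm_sub_rev,
    show (k : ℂ) * (2 * Real.pi * Complex.I / p) = Complex.I * ((2 * Real.pi * k / p : ℝ) : ℂ) by
      push_cast; ring, Complex.norm_exp_I_mul_ofReal_sub_one, Real.norm_eq_abs, abs_of_nonneg]
  · congr 2; ring
  · have hk' : (k : ℝ) ≤ p := by exact_mod_cast hk
    apply mul_nonneg (by norm_num)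
    apply Real.sin_nonneg_of_nonneg_of_le_pi
    · have := Real.pi_pos; positivity
    · rw [div_div, div_le_iff₀ (by positivity)]
      have := mul_le_mul_of_nonneg_left hk' Real.pi_pos.le
      nlinarith

lemma sinprod (p m : ℕ) [Fact p.Prime] (hm : p = 2 * m + 1) :
    ∏ i ∈ Finset.range m, (2 * Real.sin (Real.pi * ((i + 1 : ℕ) : ℝ) / p)) = Real.sqrt p := by
  have hp : (0 : ℝ) < p := by exact_mod_cast (Fact.out : p.Prime).pos
  have h := (prim_zetapc p)
  have h2 : IsPrimitiveRoot (zetapc p) (2 * m + 1) := by rw [← hm]; exact h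
  have h3 := congrArg norm h2.prod_one_sub_pow_eq_order
  rw [norm_prod] at h3
  have h4 : ‖((2 * m : ℕ) : ℂ) + 1‖ = p := by
    rw [hm]
    rw [show ((2 * m : ℕ) : ℂ) + 1 = ((2 * m + 1 : ℕ) : ℂ) by push_cast; ring, Complex.norm_natCast]
  rw [h4, two_mul, Finset.prod_range_add] at h3
  have h5 : ∏ x ∈ Finset.range m, ‖1 - zetapc p ^ (m + x + 1)‖ =
      ∏ x ∈ Finset.range m, ‖1 - zetapc p ^ (x + 1)‖ := by
    rw [← Finset.prod_range_reflect]
    apply Finset.prod_congr rfl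
    intro i hi
    have hi' := Finset.mem_range.1 hi
    rw [one_sub_zeta_norm _ _ (by omega), one_sub_zeta_norm _ _ (by omega), ← Real.sin_pi_sub]
    congr 2
    have : (m + (m - 1 - i) + 1 : ℕ) = p - (i + 1) := by omega
    rw [this, Nat.cast_sub (by omega)]
    field_simp
    ring
  rw [h5] at h3
  have h6 : ∏ x ∈ Finset.range m, ‖1 - zetapc p ^ (x + 1)‖ =
      ∏ i ∈ Finset.range m, (2 * Real.sin (Real.pi * ((i + 1 : ℕ) : ℝ) / p)) := by
    apply Finset.prod_congr rfl
    intro i hi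
    have hi' := Finset.mem_range.1 hi
    rw [one_sub_zeta_norm _ _ (by omega)]
  rw [← h6, ← h3, Real.sqrt_mul_self]
  exact Finset.prod_nonneg fun _ _ => norm_nonneg _

lemma signprod (m : ℕ) :
    (∏ i ∈ Finset.range m, ((-1 : ℂ) ^ (i + 1) * Complex.I)) * (-1) ^ m = Complex.I ^ (m ^ 2) := by
  induction m with
  | zero => simp
  | succ m ih =>
    rw [Finset.prod_range_succ, show (m + 1) ^ 2 = m ^ 2 + 2 * m + 1 by ring, pow_add _ (m ^ 2 + 2 * m),
      pow_add _ (m ^ 2), ← ih, pow_mul, Complex.I_sq, pow_one]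
    ring

lemma factor_val (p m k : ℕ) [Fact p.Prime] (hm : p = 2 * m + 1) (hk : k ≤ p) :
    zetapc p ^ ((m + 1) * k) - zetapc p ^ ((m + 1) * (p - k))
      = (-1) ^ k * Complex.I * ((2 * Real.sin (Real.pi * k / p) : ℝ) : ℂ) := by
  have hp : (p : ℂ) ≠ 0 := by exact_mod_cast (Fact.out : p.Prime).ne_zero
  have hpm : (p : ℂ) = 2 * m + 1 := by rw [hm]; push_cast; ring
  have h1 : zetapc p ^ (m + 1) = - Complex.exp (Real.pi * Complex.I / p) := by
    rw [zetapc, ← Complex.exp_nat_mul]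
    rw [show ((m + 1 : ℕ) : ℂ) * (2 * Real.pi * Complex.I / p)
      = Real.pi * Complex.I + Real.pi * Complex.I / p by
        push_cast; field_simp; rw [hpm]; ring]
    rw [Complex.exp_add, Complex.exp_pi_mul_I]; ring
  have h2 : zetapc p ^ ((m + 1) * k) = (-1) ^ k * Complex.exp ((Real.pi * k / p) * Complex.I) := by
    rw [pow_mul, h1, neg_pow, ← Complex.exp_nat_mul]
    congr 2; ring
  have h3 : zetapc p ^ ((m + 1) * (p - k)) =
      (-1) ^ k * Complex.exp (-(Real.pi * k / p) * Complex.I) := by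
    have h4 : zetapc p ^ ((m + 1) * (p - k)) * zetapc p ^ ((m + 1) * k) = 1 := by
      rw [← pow_add, ← mul_add, Nat.sub_add_cancel hk, mul_comm, pow_mul, (prim_zetapc p).pow_eq_one,
        one_pow]
    rw [h2] at h4
    have h5 : ((-1 : ℂ) ^ k) * (-1) ^ k = 1 := by rw [← mul_pow]; simp
    have h6 : Complex.exp (-(Real.pi * k / p) * Complex.I) * Complex.exp ((Real.pi * k / p) * Complex.I) = 1 := by
      rw [← Complex.exp_add]; simp
    have h7 := Complex.exp_ne_zero ((Real.pi * k / p) * Complex.I)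
    apply mul_right_cancel₀ h7
    rw [mul_assoc, h6]
    linear_combination (-1) ^ k * h4 - zetapc p ^ ((m + 1) * (p - k)) * Complex.exp ((Real.pi * k / p) * Complex.I) * h5
  rw [h2, h3]
  have := Complex.two_sin (Real.pi * k / p)
  push_cast
  rw [this]
  linear_combination (-1) ^ k * (Complex.exp ((Real.pi * k / p) * Complex.I) - Complex.exp (-(Real.pi * k / p) * Complex.I)) * Complex.I_sq
open Polynomial in
lemma gauss_val (p : ℕ) [Fact p.Prime] (hodd : Odd p) :
    ∑ j : ZMod p, (qchar (ZMod p) j : ℂ) * zetapc p ^ j.val = sqrtpstar p := by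
  have hp : p.Prime := Fact.out
  obtain ⟨m, hm⟩ := hodd
  have hm0 : 0 < m := by
    rcases Nat.eq_zero_or_pos m with h | h
    · subst h; exact absurd hp (by rw [hm]; norm_num)
    · exact h
  have hchar : ringChar (ZMod p) ≠ 2 := by rw [ZMod.ringChar_zmod_n]; omega
  set P : ℤ[X] := ∏ i ∈ Finset.range m, (X ^ ((m + 1) * (i + 1)) - X ^ ((m + 1) * (p - (i + 1))))
    with hP
  have hsp : sqrtpstar p = Complex.I ^ (m ^ 2) * (Real.sqrt p : ℂ) := by
    rw [sqrtpstar, show (p - 1) / 2 = m by omega]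
  have hPval : aeval (zetapc p) P * (-1) ^ m = sqrtpstar p := by
    rw [hsp, ← signprod, ← sinprod p m hm, hP, map_prod]
    rw [Complex.ofReal_prod, mul_right_comm, ← Finset.prod_mul_distrib]
    congr 1
    apply Finset.prod_congr rfl
    intro i hi
    have hi' := Finset.mem_range.1 hi
    rw [← factor_val p m (i + 1) hm (by omega)]
    simp
  set G : ℂ := ∑ j : ZMod p, (qchar (ZMod p) j : ℂ) * zetapc p ^ j.val with hG
  have hGsq : G ^ 2 = sqrtpstar p ^ 2 := by
    have h1 : G = gaussSum ((quadraticChar (ZMod p)).ringHomComp (Int.castRingHom ℂ))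
        ZMod.stdAddChar := by
      rw [hG, gaussSum]
      apply Finset.sum_congr rfl
      intro j _
      rw [std_eq, qchar_eq]
      simp
    have h2 : (quadraticChar (ZMod p)).ringHomComp (Int.castRingHom ℂ) ≠ 1 := by
      rw [Ne, MulChar.ringHomComp_eq_one_iff (RingHom.injective_int _)]
      exact quadraticChar_ne_one hchar
    rw [h1, gaussSum_sq h2 ((quadraticChar_isQuadratic _).comp _) (ZMod.isPrimitive_stdAddChar p)]
    rw [hsp, mul_pow, ← Complex.ofReal_pow, Real.sq_sqrt (by positivity), ZMod.card]
    rw [← pow_mul, mul_comm (m ^ 2), pow_mul, Complex.I_sq]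
    simp only [MulChar.ringHomComp_apply]
    rw [quadraticChar_neg_one hchar, ZMod.card, hm, ZMod.χ₄_eq_neg_one_pow (by omega)]
    rw [show (2 * m + 1) / 2 = m by omega]
    have : (-1 : ℂ) ^ m ^ 2 = (-1) ^ m := by
      rcases Nat.even_or_odd m with h | h
      · rw [h.neg_one_pow, (h.pow_of_ne_zero (by norm_num)).neg_one_pow]
      · rw [h.neg_one_pow, (h.pow).neg_one_pow]
    rw [this]
    simp
  obtain ⟨τ, hτ, hGτ⟩ : ∃ τ : ℤ, (τ = 1 ∨ τ = -1) ∧ G = τ * sqrtpstar p := by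
    rcases sq_eq_sq_iff_eq_or_eq_neg.1 hGsq with h | h
    · exact ⟨1, Or.inl rfl, by simp [h]⟩
    · exact ⟨-1, Or.inr rfl, by simp [h]⟩
  have hF := thetaOp_vanish p m (by omega)
    ((∑ j : ZMod p, C (qchar (ZMod p) j) * X ^ j.val) - C (τ * (-1) ^ m) * P) (by
      rw [map_sub, map_sum, map_mul, aeval_C]
      simp only [map_mul, aeval_C, map_pow, aeval_X]
      simp only [eq_intCast, algebraMap_int_eq, Int.cast_neg, Int.cast_one]
      rw [← hG, hGτ, ← hPval]; ring)
  have hPm : P.map (Int.castRingHom (ZMod p)) = (X - 1) ^ m *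
      ∏ i ∈ Finset.range m, ((∑ l ∈ Finset.range ((m + 1) * (i + 1)), X ^ l)
        - ∑ l ∈ Finset.range ((m + 1) * (p - (i + 1))), X ^ l) := by
    rw [hP, Polynomial.map_prod]
    conv_rhs => rw [show ((X - 1 : (ZMod p)[X])) ^ m = ∏ i ∈ Finset.range m, (X - 1 : (ZMod p)[X]) by simp]
    rw [← Finset.prod_mul_distrib]
    apply Finset.prod_congr rfl
    intro i _
    rw [mul_sub, mul_geom_sum, mul_geom_sum]
    simp
  have hQ : eval 1 (∏ i ∈ Finset.range m, ((∑ l ∈ Finset.range ((m + 1) * (i + 1)), (X : (ZMod p)[X]) ^ l)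
        - ∑ l ∈ Finset.range ((m + 1) * (p - (i + 1))), X ^ l)) = (m.factorial : ZMod p) := by
    rw [eval_prod, ← Finset.prod_range_add_one_eq_factorial]
    push_cast
    apply Finset.prod_congr rfl
    intro i hi
    have hi' := Finset.mem_range.1 hi
    have hp0 : (2 * m + 1 : ZMod p) = 0 := by
      have : ((2 * m + 1 : ℕ) : ZMod p) = 0 := by rw [← hm]; simp
      exact_mod_cast this
    simp only [eval_sub, eval_finsetSum, eval_pow, eval_X, one_pow, Finset.sum_const,
      Finset.card_range, nsmul_eq_mul, mul_one]
    push_cast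
    rw [Nat.cast_sub (by omega)]
    simp
    linear_combination ((i : ZMod p) + 1) * hp0
  rw [Polynomial.map_sub, Polynomial.map_mul, hPm, map_sub, eval_sub, Polynomial.map_C, ← smul_eq_C_mul,
    map_smul, eval_smul, thetaOp_pow_eval, hQ, Polynomial.map_sum, map_sum, eval_finsetSum] at hF
  have hs : ∑ j : ZMod p, eval 1 (((thetaOp (ZMod p)) ^ m)
      (Polynomial.map (Int.castRingHom (ZMod p)) (C (qchar (ZMod p) j) * X ^ j.val))) = -1 := by
    have : ∀ j : ZMod p, eval 1 (((thetaOp (ZMod p)) ^ m)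
      (Polynomial.map (Int.castRingHom (ZMod p)) (C (qchar (ZMod p) j) * X ^ j.val)))
        = if j = 0 then 0 else 1 := by
      intro j
      rw [Polynomial.map_mul, Polynomial.map_C, ← smul_eq_C_mul, Polynomial.map_pow, Polynomial.map_X,
        map_smul, thetaOp_pow_X, qchar_eq]
      simp only [eval_smul, eval_pow, eval_X, one_pow, smul_eq_mul, mul_one, eq_intCast,
        ZMod.natCast_val, ZMod.cast_id', id]
      rw [quadraticChar_eq_pow_of_char_ne_two' hchar, ZMod.card, show p / 2 = m by omega, ← pow_add,
        show m + m = p - 1 by omega]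
      split_ifs with h
      · rw [h, zero_pow]; omega
      · exact ZMod.pow_card_sub_one_eq_one h
    rw [Finset.sum_congr rfl fun j _ => this j]
    rw [Finset.sum_ite]
    simp [Finset.filter_ne']
    rw [Nat.cast_sub hp.one_lt.le]; simp
  rw [hs] at hF
  have hw := fact_sq p m hm
  have h2 : (τ : ZMod p) = 1 := by
    simp only [smul_eq_mul, eq_intCast] at hF
    push_cast at hF
    linear_combination hF + τ * hw
  have : τ = 1 := by
    rcases hτ with h | h
    · exact h
    · exfalso
      rw [h] at h2
      have h3 : (2 : ZMod p) = 0 := by push_cast at h2; linear_combination -h2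
      have h4 : ((2 : ℕ) : ZMod p) = 0 := by exact_mod_cast h3
      rw [ZMod.natCast_eq_zero_iff] at h4
      have := Nat.le_of_dvd (by norm_num) h4
      omega
  rw [hGτ, this]; simp
lemma sqrtpstar_sq (p : ℕ) [Fact p.Prime] (hodd : Odd p) :
    sqrtpstar p ^ 2 = ((qchar (ZMod p) (-1) * p : ℤ) : ℂ) := by
  obtain ⟨m, hm⟩ := hodd
  have hchar : ringChar (ZMod p) ≠ 2 := by rw [ZMod.ringChar_zmod_n]; omega
  rw [sqrtpstar, show (p - 1) / 2 = m by omega, mul_pow, ← Complex.ofReal_pow,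
    Real.sq_sqrt (by positivity), ← pow_mul, mul_comm (m ^ 2), pow_mul, Complex.I_sq, qchar_eq,
    quadraticChar_neg_one hchar, ZMod.card]
  have h0 : ZMod.χ₄ p = (-1) ^ m := by
    rw [hm, ZMod.χ₄_eq_neg_one_pow (by omega), show (2 * m + 1) / 2 = m by omega]
  have : (-1 : ℂ) ^ m ^ 2 = (-1) ^ m := by
    rcases Nat.even_or_odd m with h | h
    · rw [h.neg_one_pow, (h.pow_of_ne_zero (by norm_num)).neg_one_pow]
    · rw [h.neg_one_pow, (h.pow).neg_one_pow]
  rw [this, h0]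
  push_cast
  rfl

open Polynomial in
lemma zeta_indep (p : ℕ) [Fact p.Prime] (a : ZMod p → ℤ)
    (h : ∑ j : ZMod p, (a j : ℂ) * zetapc p ^ j.val = 0) : ∃ K : ℤ, ∀ j, a j = K := by
  have hp : p.Prime := Fact.out
  set F : ℤ[X] := ∑ j : ZMod p, C (a j) * X ^ j.val with hF
  have hF0 : aeval (zetapc p) F = 0 := by
    rw [hF, map_sum, ← h]
    simp
  have hd : cyclotomic p ℤ ∣ F := by
    rw [cyclotomic_eq_minpoly (prim_zetapc p) hp.pos]
    exact minpoly.isIntegrallyClosed_dvd ((prim_zetapc p).isIntegral hp.pos) hF0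
  obtain ⟨g, hg⟩ := hd
  have hdeg : F.natDegree ≤ p - 1 := by
    rw [hF]
    apply natDegree_sum_le_of_forall_le
    intro j _
    refine (natDegree_C_mul_X_pow_le _ _).trans ?_
    have := ZMod.val_lt j
    omega
  have hg0 : g.natDegree = 0 := by
    by_cases hgz : g = 0
    · simp [hgz]
    · rw [hg, natDegree_mul (cyclotomic_ne_zero p ℤ) hgz, natDegree_cyclotomic,
        Nat.totient_prime hp] at hdeg
      omega
  obtain ⟨K, hK⟩ := natDegree_eq_zero.1 hg0
  refine ⟨K, fun j => ?_⟩
  have h1 : F.coeff j.val = a j := by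
    rw [hF, finsetSum_coeff, Finset.sum_eq_single j]
    · simp
    · intro b _ hb
      rw [coeff_C_mul_X_pow, if_neg]
      intro h; exact hb (ZMod.val_injective p h.symm)
    · simp
  rw [← h1, hg, ← hK, mul_comm, coeff_C_mul, cyclotomic_prime, finsetSum_coeff]
  simp only [coeff_X_pow]
  rw [Finset.sum_ite_eq, if_pos (Finset.mem_range.2 (ZMod.val_lt j)), mul_one]

lemma count_formula (p e : ℕ) [Fact p.Prime] (hodd : Odd p) (heodd : Odd e)
    (Fq : Type) [Field Fq] [Fintype Fq] [Algebra (ZMod p) Fq]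
    (hcq : Fintype.card Fq = p ^ e)
    (f : Fq → ZMod p) (ε : ℤ) (fstar : Fq → ZMod p) (hRF : IsRF p e Fq f ε fstar)
    (b : Fq) (c : ZMod p) :
    ((Finset.univ.filter fun x : Fq => f x - Algebra.trace (ZMod p) Fq (b * x) = c).card : ℤ)
      = p ^ (e - 1) + (ε * qchar (ZMod p) (-1) ^ ((e + 1) / 2)) * p ^ ((e - 1) / 2)
        * qchar (ZMod p) (fstar b - c) := by
  have hp : p.Prime := Fact.out
  have hchar : ringChar (ZMod p) ≠ 2 := by
    rw [ZMod.ringChar_zmod_n]; rintro rfl; exact absurd hodd (by decide)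
  obtain ⟨n, hn⟩ := heodd
  set M : ZMod p → ℤ := fun c =>
    ((Finset.univ.filter fun x : Fq => f x - Algebra.trace (ZMod p) Fq (b * x) = c).card : ℤ) with hM
  have hw := hRF.walsh b
  have h1 : (∑ x : Fq, zetapc p ^ (f x - Algebra.trace (ZMod p) Fq (b * x)).val)
      = ∑ c : ZMod p, (M c : ℂ) * zetapc p ^ c.val := by
    rw [← Finset.sum_fiberwise Finset.univ
      (fun x : Fq => f x - Algebra.trace (ZMod p) Fq (b * x))]
    apply Finset.sum_congr rfl
    intro c _
    rw [Finset.sum_congr rfl (g := fun _ => zetapc p ^ c.val)]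
    · simp [hM]
    · intro x hx
      rw [(Finset.mem_filter.1 hx).2]
  set A : ℤ := ε * (qchar (ZMod p) (-1) * p) ^ n with hA
  have h2 : (ε : ℂ) * sqrtpstar p ^ e * zetapc p ^ (fstar b).val
      = ∑ c : ZMod p, ((A * qchar (ZMod p) (c - fstar b) : ℤ) : ℂ) * zetapc p ^ c.val := by
    rw [hn, pow_succ, pow_mul, sqrtpstar_sq p hodd, ← gauss_val p hodd,
      ← Equiv.sum_comp (Equiv.addRight (fstar b)) (fun c : ZMod p =>
        ((A * qchar (ZMod p) (c - fstar b) : ℤ) : ℂ) * zetapc p ^ c.val)]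
    rw [Finset.mul_sum, Finset.mul_sum, Finset.sum_mul]
    apply Finset.sum_congr rfl
    intro j _
    rw [Equiv.coe_addRight, add_sub_cancel_right, ← std_eq, ← std_eq, ← std_eq, AddChar.map_add_eq_mul,
      hA]
    push_cast
    ring
  obtain ⟨K, hK⟩ := zeta_indep p (fun c => M c - A * qchar (ZMod p) (c - fstar b)) (by
    have : ∑ c : ZMod p, (M c : ℂ) * zetapc p ^ c.val
      = ∑ c : ZMod p, ((A * qchar (ZMod p) (c - fstar b) : ℤ) : ℂ) * zetapc p ^ c.val := by
      rw [← h1, ← h2, hw]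
    rw [← sub_eq_zero, ← Finset.sum_sub_distrib] at this
    rw [← this]
    apply Finset.sum_congr rfl
    intro j _
    push_cast
    ring)
  have hs1 : ∑ c, M c = (p : ℤ) ^ e := by
    have := Finset.card_eq_sum_card_fiberwise (s := (Finset.univ : Finset Fq))
      (t := (Finset.univ : Finset (ZMod p)))
      (f := fun x : Fq => f x - Algebra.trace (ZMod p) Fq (b * x)) (fun _ _ => Finset.mem_coe.2 (Finset.mem_univ _))
    rw [Finset.card_univ, hcq] at this
    rw [hM]
    simp only
    rw [← Nat.cast_sum, ← this, Nat.cast_pow]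
  have hs2 : ∑ c : ZMod p, qchar (ZMod p) (c - fstar b) = 0 := by
    have h5 := Equiv.sum_comp (Equiv.subRight (fstar b)) (fun c => qchar (ZMod p) c)
    simp only [Equiv.subRight_apply] at h5
    rw [h5]
    simp only [qchar_eq]
    exact quadraticChar_sum_zero hchar
  have hs3 : (p : ℤ) * K = p ^ e := by
    have : ∑ c : ZMod p, (M c - A * qchar (ZMod p) (c - fstar b)) = ∑ c : ZMod p, K :=
      Finset.sum_congr rfl fun c _ => hK c
    rw [Finset.sum_sub_distrib, ← Finset.mul_sum, hs1, hs2] at this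
    simp at this
    exact this.symm
  have hKv : K = (p : ℤ) ^ (e - 1) := by
    have h0 : (p : ℤ) ≠ 0 := by exact_mod_cast hp.ne_zero
    apply mul_left_cancel₀ h0
    rw [hs3, ← pow_succ']
    congr 1; omega
  have hq : qchar (ZMod p) (c - fstar b) = qchar (ZMod p) (-1) * qchar (ZMod p) (fstar b - c) := by
    rw [qchar_eq, qchar_eq, qchar_eq, ← map_mul]
    congr 1; ring
  have := hK c
  change M c = _
  rw [show (e + 1) / 2 = n + 1 by omega, show (e - 1) / 2 = n by omega, ← hKv]
  simp only [hq, hA] at this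
  rw [mul_pow] at this
  linear_combination this

/-- Evenness of `f` forces the dual to vanish at `0`. -/
lemma fstar_zero (p e : ℕ) [Fact p.Prime] (hodd : Odd p) (heodd : Odd e)
    (Fq : Type) [Field Fq] [Fintype Fq] [Algebra (ZMod p) Fq]
    (hcq : Fintype.card Fq = p ^ e)
    (f : Fq → ZMod p) (ε : ℤ) (fstar : Fq → ZMod p) (hRF : IsRF p e Fq f ε fstar) :
    fstar 0 = 0 := by
  by_contra hne
  have h := count_formula p e hodd heodd Fq hcq f ε fstar hRF 0 (fstar 0)
  simp only [sub_self, zero_mul, map_zero, sub_zero] at h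
  rw [show qchar (ZMod p) 0 = 0 by simp [qchar], mul_zero, add_zero] at h
  have hneg : ∀ x, f (-x) = f x := by
    intro x
    obtain ⟨k, hk, -, -, hh⟩ := hRF.hom
    have := hh (-1) (by simp) x
    rw [hk.neg_one_pow] at this
    simpa using this
  have h2 : (2 : Fq) ≠ 0 := by
    intro h2
    have h3 : algebraMap (ZMod p) Fq 2 = 0 := by rw [map_ofNat]; exact h2
    have h4 : (2 : ZMod p) = 0 := (map_eq_zero _).1 h3
    have h4 : ((2 : ℕ) : ZMod p) = 0 := by exact_mod_cast h4
    rw [ZMod.natCast_eq_zero_iff, (Nat.prime_dvd_prime_iff_eq Fact.out Nat.prime_two)] at h4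
    subst h4; exact absurd hodd (by decide)
  have heven : Even (Finset.univ.filter fun x : Fq => f x = fstar 0).card := by
    rw [← ZMod.natCast_eq_zero_iff_even]
    rw [Finset.card_eq_sum_ones, Nat.cast_sum]
    apply Finset.sum_involution (fun x _ => -x)
    · intro x hx; decide
    · intro x hx _ hxx
      have : x = 0 := by
        have : (2 : Fq) * x = 0 := by linear_combination -hxx
        exact (mul_eq_zero.1 this).resolve_left h2
      have h3 := (Finset.mem_filter.1 hx).2
      rw [this, hRF.map_zero] at h3
      exact hne h3.symm
    · intro x hx
      simp
    · intro x hx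
      simpa [hneg] using hx
  have hc : (Finset.univ.filter fun x : Fq => f x = fstar 0).card = p ^ (e - 1) := by
    exact_mod_cast h
  rw [hc] at heven
  exact (Nat.not_even_iff_odd.2 hodd.pow) heven
lemma pow_indep (p e : ℕ) [Fact p.Prime] (Fq : Type) [Field Fq] [Fintype Fq] [Algebra (ZMod p) Fq]
    (hcq : Fintype.card Fq = p ^ e) (β : Fq) (hβ : ∀ y : Fq, y ≠ 0 → ∃ k : ℕ, β ^ k = y) :
    LinearIndependent (ZMod p) (fun i : Fin e => β ^ (i : ℕ)) := by
  have hp : p.Prime := Fact.out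
  have : FiniteDimensional (ZMod p) Fq := Module.Finite.of_finite
  have hfin : Module.finrank (ZMod p) Fq = e := by
    have h := Module.card_eq_pow_finrank (K := ZMod p) (V := Fq)
    rw [hcq, ZMod.card] at h
    exact (Nat.pow_right_injective hp.two_le h).symm
  have htop : Algebra.adjoin (ZMod p) {β} = ⊤ := by
    rw [eq_top_iff]
    intro y _
    by_cases hy : y = 0
    · rw [hy]; exact zero_mem _
    · obtain ⟨k, rfl⟩ := hβ y hy
      exact Subalgebra.pow_mem _ (Algebra.subset_adjoin (Set.mem_singleton β)) k
  have hint : IsIntegral (ZMod p) β := Algebra.IsIntegral.isIntegral β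
  have hdim : (minpoly (ZMod p) β).natDegree = e := by
    let pb := PowerBasis.ofAdjoinEqTop hint htop
    have h1 := pb.finrank
    rw [PowerBasis.ofAdjoinEqTop_dim, hfin] at h1
    exact h1.symm
  have h := linearIndependent_pow (K := ZMod p) β
  rw [hdim] at h
  exact h

lemma trace_zero (p e : ℕ) [Fact p.Prime] (Fq : Type) [Field Fq] [Fintype Fq] [Algebra (ZMod p) Fq]
    (hcq : Fintype.card Fq = p ^ e) (β : Fq) (hβ : ∀ y : Fq, y ≠ 0 → ∃ k : ℕ, β ^ k = y)
    (d : Fq) (hd : ∀ i : Fin e, Algebra.trace (ZMod p) Fq (β ^ (i : ℕ) * d) = 0) : d = 0 := by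
  have hp : p.Prime := Fact.out
  have : FiniteDimensional (ZMod p) Fq := Module.Finite.of_finite
  have hfin : Module.finrank (ZMod p) Fq = e := by
    have h := Module.card_eq_pow_finrank (K := ZMod p) (V := Fq)
    rw [hcq, ZMod.card] at h
    exact (Nat.pow_right_injective hp.two_le h).symm
  have hspan := (pow_indep p e Fq hcq β hβ).span_eq_top_of_card_eq_finrank' (by simp [hfin])
  apply (traceForm_nondegenerate (ZMod p) Fq).2
  intro y
  have hy : y ∈ Submodule.span (ZMod p) (Set.range fun i : Fin e => β ^ (i : ℕ)) := by
    rw [hspan]; trivial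
  induction hy using Submodule.span_induction with
  | mem x hx => obtain ⟨i, rfl⟩ := hx; simpa [Algebra.traceForm_apply] using hd i
  | zero => simp
  | add x y _ _ hx hy => rw [map_add, LinearMap.add_apply, hx, hy, add_zero]
  | smul c x _ hx => rw [map_smul, LinearMap.smul_apply, hx, smul_zero]

lemma trace_fiber (p e : ℕ) [Fact p.Prime] (he : 0 < e) (Fq : Type) [Field Fq] [Fintype Fq]
    [Algebra (ZMod p) Fq]
    (hcq : Fintype.card Fq = p ^ e) (g : Fq) (hg : g ≠ 0) (a : ZMod p) :
    (Finset.univ.filter fun x : Fq => a + Algebra.trace (ZMod p) Fq (g * x) = 0).card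
      = p ^ (e - 1) := by
  have hp : p.Prime := Fact.out
  have : FiniteDimensional (ZMod p) Fq := Module.Finite.of_finite
  obtain ⟨t, ht⟩ := Algebra.trace_surjective (ZMod p) Fq 1
  have heq : ∀ c : ZMod p, (Finset.univ.filter fun x : Fq => Algebra.trace (ZMod p) Fq (g * x) = c).card
      = (Finset.univ.filter fun x : Fq => a + Algebra.trace (ZMod p) Fq (g * x) = 0).card := by
    intro c
    apply Finset.card_bij' (fun x _ => x + (-a - c) • (g⁻¹ * t)) (fun x _ => x - (-a - c) • (g⁻¹ * t))
    · intro x hx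
      have hx := (Finset.mem_filter.1 hx).2
      simp [mul_add, hx, mul_inv_cancel_left₀ hg, ht]
    · intro x hx
      have hx := (Finset.mem_filter.1 hx).2
      simp [mul_sub, mul_inv_cancel_left₀ hg, ht]
      linear_combination hx
    · intro x _; simp
    · intro x _; simp
  have := Finset.card_eq_sum_card_fiberwise (s := (Finset.univ : Finset Fq))
      (t := (Finset.univ : Finset (ZMod p)))
      (f := fun x : Fq => Algebra.trace (ZMod p) Fq (g * x)) (fun _ _ => Finset.mem_coe.2 (Finset.mem_univ _))
  rw [Finset.card_univ, hcq, Finset.sum_congr rfl (fun c _ => heq c)] at this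
  simp only [Finset.sum_const, Finset.card_univ, ZMod.card, smul_eq_mul] at this
  have e1 : p ^ e = p * p ^ (e - 1) := by rw [← pow_succ']; congr 1; omega
  rw [e1] at this
  exact (Nat.eq_of_mul_eq_mul_left hp.pos this).symm

lemma hammingNorm_elim {α γ F : Type} [Fintype α] [Fintype γ] [CommRing F] [DecidableEq F] (c : α ⊕ γ → F) :
    hammingNorm c = hammingNorm (fun i => c (Sum.inl i)) + hammingNorm (fun i => c (Sum.inr i)) := by
  simp only [hammingNorm, Finset.card_filter, Fintype.sum_sum_type]

lemma hammingNorm_add_zeros {γ F : Type} [Fintype γ] [CommRing F] [DecidableEq F] (c : γ → F) :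
    hammingNorm c + (Finset.univ.filter fun x => c x = 0).card = Fintype.card γ := by
  rw [hammingNorm, add_comm, Finset.card_filter_add_card_filter_not (fun x => c x = 0), Finset.card_univ]

lemma row_sum (p e : ℕ) [Fact p.Prime] (Fq : Type) [Field Fq] [Fintype Fq] [Algebra (ZMod p) Fq]
    (f : Fq → ZMod p) (β : Fq)
    (G2 : Fin (e + 2) → Fq → ZMod p)
    (hG2 : ∀ k d, G2 k d =
      if (k : ℕ) = 0 then 1
      else if (k : ℕ) = 1 then f d + 1
      else Algebra.trace (ZMod p) Fq (β ^ ((k : ℕ) - 2) * d)) (v : Fin (e + 2) → ZMod p) (d : Fq) :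
    ∑ j, v j * G2 j d = v 0 + v 1 * (f d + 1)
      + Algebra.trace (ZMod p) Fq ((∑ i : Fin e, v i.succ.succ • β ^ (i : ℕ)) * d) := by
  rw [Fin.sum_univ_succ, Fin.sum_univ_succ, Finset.sum_mul, map_sum, ← add_assoc]
  congr 1
  · simp [hG2]
  · apply Finset.sum_congr rfl
    intro i _
    simp [hG2]
lemma qchar_le_one (p : ℕ) [Fact p.Prime] (a : ZMod p) : |qchar (ZMod p) a| ≤ 1 := by
  rw [qchar]; split_ifs <;> simp

lemma hammingNorm_ge_two {ι F : Type} [Fintype ι] [CommRing F] [DecidableEq F] (c : ι → F) (i j : ι) (hij : i ≠ j)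
    (hi : c i ≠ 0) (hj : c j ≠ 0) : 2 ≤ hammingNorm c := by
  rw [hammingNorm, ← Finset.card_pair hij]
  apply Finset.card_le_card
  intro k hk
  simp only [Finset.mem_insert, Finset.mem_singleton] at hk
  rcases hk with rfl | rfl <;> simpa

lemma zeros_bound (p e : ℕ) [Fact p.Prime] (hodd : Odd p) (he : 3 ≤ e) (heodd : Odd e)
    (Fq : Type) [Field Fq] [Fintype Fq] [Algebra (ZMod p) Fq]
    (hcq : Fintype.card Fq = p ^ e)
    (f : Fq → ZMod p) (ε : ℤ) (fstar : Fq → ZMod p) (hRF : IsRF p e Fq f ε fstar)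
    (a b : ZMod p) (g : Fq) (hb : b ≠ 0) :
    ((Finset.univ.filter fun x : Fq =>
      a + b * (f x + 1) + Algebra.trace (ZMod p) Fq (g * x) = 0).card : ℤ)
      = p ^ (e - 1) + (ε * qchar (ZMod p) (-1) ^ ((e + 1) / 2)) * p ^ ((e - 1) / 2)
        * qchar (ZMod p) (fstar (-(b⁻¹ • g)) + (b⁻¹ * a + 1)) := by
  have h := count_formula p e hodd heodd Fq hcq f ε fstar hRF (-(b⁻¹ • g)) (-(b⁻¹ * a + 1))
  rw [sub_neg_eq_add] at h
  rw [← h]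
  congr 2
  apply Finset.filter_congr
  intro x _
  rw [neg_mul, map_neg, smul_mul_assoc, map_smul, smul_eq_mul]
  constructor
  · intro h1
    have : b * (f x - -(b⁻¹ * Algebra.trace (ZMod p) Fq (g * x))) = b * (-(b⁻¹ * a + 1)) := by
      field_simp
      linear_combination h1
    exact mul_left_cancel₀ hb this
  · intro h1
    have h2 : b * (f x - -(b⁻¹ * Algebra.trace (ZMod p) Fq (g * x))) = b * (-(b⁻¹ * a + 1)) := by
      rw [h1]
    field_simp at h2
    linear_combination h2

lemma arith (p e : ℕ) (hp : 3 ≤ p) (he : 3 ≤ e) :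
    p ^ (e - 1) + p ^ ((e - 1) / 2) + p ^ (e - 1) ≤ p ^ e ∧ 1 ≤ p ^ ((e - 1) / 2) := by
  constructor
  · have h1 : p ^ ((e - 1) / 2) ≤ p ^ (e - 1) := Nat.pow_le_pow_right (by omega) (by omega)
    have h2 : p ^ e = p * p ^ (e - 1) := by rw [← pow_succ']; congr 1; omega
    have h3 : 3 * p ^ (e - 1) ≤ p * p ^ (e - 1) := Nat.mul_le_mul_right _ hp
    omega
  · exact Nat.one_le_pow _ _ (by omega)


lemma isMinDist_iff (p : ℕ) {ι : Type} [Fintype ι] (C : Set (ι → ZMod p)) (d : ℕ) :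
    IsMinDist C d ↔ (∃ c ∈ C, c ≠ 0 ∧ hammingNorm c = d) ∧ ∀ c ∈ C, c ≠ 0 → d ≤ hammingNorm c := by
  unfold IsMinDist
  convert Iff.rfl

set_option maxHeartbeats 2000000

theorem stmt18 (p e : ℕ) [Fact p.Prime] (hodd : Odd p) (he : 3 ≤ e) (heodd : Odd e)
    (Fq : Type) [Field Fq] [Fintype Fq] [Algebra (ZMod p) Fq]
    (hcq : Fintype.card Fq = p ^ e)
    (f : Fq → ZMod p) (ε : ℤ) (fstar : Fq → ZMod p) (hRF : IsRF p e Fq f ε fstar)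
    -- `β` is a primitive element of `F_q`
    (β : Fq) (hβ : ∀ y : Fq, y ≠ 0 → ∃ k : ℕ, β ^ k = y)
    -- the matrix `G₂`
    (G2 : Fin (e + 2) → Fq → ZMod p)
    (hG2 : ∀ k d, G2 k d =
      if (k : ℕ) = 0 then 1
      else if (k : ℕ) = 1 then f d + 1
      else Algebra.trace (ZMod p) Fq (β ^ ((k : ℕ) - 2) * d))
    (C' : Set ((Fin (e + 2) ⊕ Fq) → ZMod p)) (hC' : C' = genCode (e + 2) G2) :
    -- length `p^e + e + 2`
    Fintype.card (Fin (e + 2) ⊕ Fq) = p ^ e + e + 2 ∧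
    -- dimension `e + 2`
    Nat.card C' = p ^ (e + 2) ∧
    -- minimum distance
    (ε * qchar (ZMod p) (-1) ^ ((e + 1) / 2) = 1 →
      IsMinDist C' (p ^ e - p ^ (e - 1) - p ^ ((e - 1) / 2) + 1)) ∧
    (ε * qchar (ZMod p) (-1) ^ ((e + 1) / 2) = -1 →
      IsMinDist C' (p ^ e - p ^ (e - 1) - p ^ ((e - 1) / 2) + 2)) ∧
    -- the dual has dimension `p^e` and minimum distance `3`
    Nat.card (dualCode C') = p ^ (p ^ e) ∧
    IsMinDist (dualCode C') 3 := by
  have hp : p.Prime := Fact.out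
  have hp3 : 3 ≤ p := by
    have := hp.two_le
    rcases hodd with ⟨m, hm⟩
    omega
  obtain ⟨har1, har2⟩ := arith p e hp3 he
  have hrow := row_sum p e Fq f β G2 hG2
  have hf0 := fstar_zero p e hodd heodd Fq hcq f ε fstar hRF
  have hzb := zeros_bound p e hodd he heodd Fq hcq f ε fstar hRF
  set S : ℤ := ε * qchar (ZMod p) (-1) ^ ((e + 1) / 2) with hS
  -- weight of a codeword
  have hwt : ∀ v : Fin (e + 2) → ZMod p,
      hammingNorm (Sum.elim v fun d => ∑ j, v j * G2 j d)
        + (Finset.univ.filter fun d => v 0 + v 1 * (f d + 1)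
      + Algebra.trace (ZMod p) Fq ((∑ i : Fin e, v i.succ.succ • β ^ (i : ℕ)) * d) = 0).card
        = hammingNorm v + p ^ e := by
    intro v
    rw [hammingNorm_elim]
    simp only [Sum.elim_inl, Sum.elim_inr]
    have := hammingNorm_add_zeros (fun d => ∑ j, v j * G2 j d)
    simp only [hrow] at this ⊢
    rw [hcq] at this
    rw [← this]
    change hammingNorm v + _ + _ = _
    ring
  have hb0 : ∀ v : Fin (e + 2) → ZMod p, v ≠ 0 → v 1 = 0 →
      (Finset.univ.filter fun d => v 0 + v 1 * (f d + 1)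
      + Algebra.trace (ZMod p) Fq ((∑ i : Fin e, v i.succ.succ • β ^ (i : ℕ)) * d) = 0).card
        ≤ p ^ (e - 1) := by
    intro v hv hv1
    simp only [hv1, zero_mul, add_zero]
    by_cases hg : (∑ i : Fin e, v i.succ.succ • β ^ (i : ℕ)) = 0
    · have hli := Fintype.linearIndependent_iff.1 (pow_indep p e Fq hcq β hβ)
        (fun i => v i.succ.succ) hg
      have hv0 : v 0 ≠ 0 := by
        intro h0
        apply hv
        funext i
        refine Fin.cases h0 (fun i => ?_) i
        refine Fin.cases hv1 (fun i => ?_) i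
        exact hli i
      rw [hg]
      simp [hv0]
    · exact (trace_fiber p e (by omega) Fq hcq _ hg (v 0)).le
  have hN1 : ∀ v : Fin (e + 2) → ZMod p, v ≠ 0 → |S| = 1 →
      (Finset.univ.filter fun d => v 0 + v 1 * (f d + 1)
      + Algebra.trace (ZMod p) Fq ((∑ i : Fin e, v i.succ.succ • β ^ (i : ℕ)) * d) = 0).card
        ≤ p ^ (e - 1) + p ^ ((e - 1) / 2) := by
    intro v hv hS1
    by_cases hv1 : v 1 = 0
    · exact (hb0 v hv hv1).trans (Nat.le_add_right _ _)
    · have h := hzb (v 0) (v 1) (∑ i : Fin e, v i.succ.succ • β ^ (i : ℕ)) hv1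
      have h1 : S * p ^ ((e - 1) / 2) * qchar (ZMod p)
        (fstar (-((v 1)⁻¹ • ∑ i : Fin e, v i.succ.succ • β ^ (i : ℕ))) + ((v 1)⁻¹ * v 0 + 1))
          ≤ (p : ℤ) ^ ((e - 1) / 2) := by
        refine (le_abs_self _).trans ?_
        rw [abs_mul, abs_mul, hS1, one_mul, abs_of_nonneg (by positivity : (0 : ℤ) ≤ (p : ℤ) ^ _)]
        exact mul_le_of_le_one_right (by positivity) (qchar_le_one p _)
      zify
      rw [h]
      linarith
  have hv0 : ∀ v : Fin (e + 2) → ZMod p,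
      Sum.elim v (fun d => ∑ j, v j * G2 j d) ≠ 0 → v ≠ 0 := by
    rintro v h rfl
    apply h
    funext x
    rcases x with x | x <;> simp
  have hv0' : ∀ v : Fin (e + 2) → ZMod p, v ≠ 0 →
      Sum.elim v (fun d => ∑ j, v j * G2 j d) ≠ 0 := by
    intro v h h0
    apply h
    funext x
    exact congrFun h0 (Sum.inl x)
  have hnp : ∀ v : Fin (e + 2) → ZMod p, v ≠ 0 → 1 ≤ hammingNorm v := fun v hv =>
    hammingNorm_pos_iff.2 hv
  have h10 : (1 : Fin (e + 2)) ≠ 0 := by simp [Fin.ext_iff]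
  have hss : ∀ i : Fin e, i.succ.succ ≠ (0 : Fin (e + 2)) := fun i => Fin.succ_ne_zero _
  have hss1 : ∀ i : Fin e, i.succ.succ ≠ (1 : Fin (e + 2)) := fun i => by
    simp [Fin.ext_iff]
  -- the dual
  have hdual : ∀ u : Fin (e + 2) ⊕ Fq → ZMod p, u ∈ dualCode C' ↔
      ∀ j, u (Sum.inl j) = - ∑ d, u (Sum.inr d) * G2 j d := by
    intro u
    have hsum : ∀ v : Fin (e + 2) → ZMod p,
        ∑ i, u i * (Sum.elim v fun d => ∑ j, v j * G2 j d) i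
          = ∑ j, v j * (u (Sum.inl j) + ∑ d, u (Sum.inr d) * G2 j d) := by
      intro v
      rw [Fintype.sum_sum_type]
      simp only [Sum.elim_inl, Sum.elim_inr, mul_add, Finset.sum_add_distrib, Finset.mul_sum]
      congr 1
      · exact Finset.sum_congr rfl fun _ _ => mul_comm _ _
      · rw [Finset.sum_comm]
        exact Finset.sum_congr rfl fun _ _ => Finset.sum_congr rfl fun _ _ => by ring
    rw [hC']
    constructor
    · intro h j
      have h1 := h _ ⟨Pi.single j 1, rfl⟩
      rw [hsum, Finset.sum_eq_single j] at h1
      · simp at h1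
        linear_combination h1
      · intro b _ hb; simp [hb]
      · simp
    · rintro h w ⟨v, rfl⟩
      rw [hsum]
      apply Finset.sum_eq_zero
      intro j _
      rw [h j]; ring
  have hG0 : ∀ d, G2 0 d = 1 := fun d => by simp [hG2]
  have hG1 : ∀ d, G2 1 d = f d + 1 := fun d => by simp [hG2]
  have hGs : ∀ (i : Fin e) d, G2 i.succ.succ d = Algebra.trace (ZMod p) Fq (β ^ (i : ℕ) * d) :=
    fun i d => by simp [hG2]
  refine ⟨?_, ?_, ?_, ?_, ?_, ?_⟩
  · rw [Fintype.card_sum, Fintype.card_fin, hcq]; ring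
  · rw [hC']
    have hinj : Function.Injective (fun v : Fin (e + 2) → ZMod p =>
        Sum.elim v fun d => ∑ j, v j * G2 j d) := by
      intro v w h
      funext j
      exact congrFun h (Sum.inl j)
    have : genCode (e + 2) G2 = Set.range (fun v : Fin (e + 2) → ZMod p =>
        Sum.elim v fun d => ∑ j, v j * G2 j d) := by
      ext w
      simp only [genCode, Set.mem_ofPred_eq, Set.mem_range, eq_comm]
    rw [this, Nat.card_range_of_injective hinj]
    simp
  · intro hS1
    rw [hC', isMinDist_iff]
    constructor
    · set v : Fin (e + 2) → ZMod p := fun i => if i = 1 then 1 else 0 with hvd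
      have e0 : v 0 = 0 := by simp [hvd, h10.symm]
      have e1 : v 1 = 1 := by simp [hvd]
      have e2 : ∀ i : Fin e, v i.succ.succ = 0 := fun i => by simp [hvd, hss1]
      have hvne : v ≠ 0 := by
        intro h; rw [h] at e1; simp at e1
      refine ⟨_, ⟨v, rfl⟩, hv0' _ hvne, ?_⟩
      have h := hwt v
      have h1 : hammingNorm v = 1 := by
        rw [hammingNorm, Finset.card_eq_one]
        exact ⟨1, by ext x; simp [hvd]⟩
      have h2 := hzb 0 1 0 one_ne_zero
      simp only [e0, e1, e2, zero_smul, Finset.sum_const_zero] at h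
      rw [h1] at h
      simp only [smul_zero, neg_zero, hf0, mul_zero, zero_add, hS1, one_mul] at h2
      rw [show qchar (ZMod p) 1 = 1 by simp [qchar], mul_one] at h2
      have h3 : (Finset.univ.filter fun x : Fq =>
        0 + 1 * (f x + 1) + Algebra.trace (ZMod p) Fq (0 * x) = 0).card
          = p ^ (e - 1) + p ^ ((e - 1) / 2) := by
        zify; simpa using h2
      rw [h3] at h
      omega
    · rintro c ⟨v, rfl⟩ hc
      have hv := hv0 v hc
      have h1 := hN1 v hv (by rw [hS1]; rfl)
      have h2 := hwt v
      have h3 := hnp v hv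
      omega
  · intro hS1
    rw [hC', isMinDist_iff]
    constructor
    · have hchar : ringChar (ZMod p) ≠ 2 := by rw [ZMod.ringChar_zmod_n]; omega
      obtain ⟨t, ht⟩ := FiniteField.exists_nonsquare hchar
      have ht0 : t ≠ 0 := by rintro rfl; exact ht ⟨0, by simp⟩
      have ht1 : t - 1 ≠ 0 := by
        intro h
        rw [sub_eq_zero] at h
        exact ht ⟨1, by simp [h]⟩
      set v : Fin (e + 2) → ZMod p := fun i => if i = 0 then t - 1 else if i = 1 then 1 else 0 with hvd
      have e0 : v 0 = t - 1 := by simp [hvd]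
      have e1 : v 1 = 1 := by simp [hvd]
      have e2 : ∀ i : Fin e, v i.succ.succ = 0 := fun i => by simp [hvd, hss1]
      have hvne : v ≠ 0 := by
        intro h; rw [h] at e1; simp at e1
      refine ⟨_, ⟨v, rfl⟩, hv0' _ hvne, ?_⟩
      have h := hwt v
      have h1 : hammingNorm v = 2 := by
        refine Eq.trans ?_ (Finset.card_pair h10.symm)
        rw [hammingNorm]
        congr 1
        ext i
        simp only [Finset.mem_filter, Finset.mem_univ, true_and, Finset.mem_insert,
          Finset.mem_singleton, hvd]
        split_ifs with h1 h2 <;> simp_all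
      have h2 := hzb (t - 1) 1 0 one_ne_zero
      simp only [e0, e1, e2, zero_smul, Finset.sum_const_zero] at h
      rw [h1] at h
      simp only [smul_zero, neg_zero, hf0, zero_add, hS1, inv_one, one_mul, sub_add_cancel] at h2
      rw [show qchar (ZMod p) t = -1 by simp [qchar, ht0, ht]] at h2
      have h3 : (Finset.univ.filter fun x : Fq =>
        t - 1 + 1 * (f x + 1) + Algebra.trace (ZMod p) Fq (0 * x) = 0).card
          = p ^ (e - 1) + p ^ ((e - 1) / 2) := by
        zify; simpa using h2
      rw [h3] at h
      omega
    · rintro c ⟨v, rfl⟩ hc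
      have hv := hv0 v hc
      have h1 := hN1 v hv (by rw [hS1]; rfl)
      have h2 := hwt v
      have h3 := hnp v hv
      by_cases h4 : 2 ≤ hammingNorm v
      · omega
      -- weight one
      have h5 : (Finset.univ.filter fun d => v 0 + v 1 * (f d + 1)
        + Algebra.trace (ZMod p) Fq ((∑ i : Fin e, v i.succ.succ • β ^ (i : ℕ)) * d) = 0).card
          ≤ p ^ (e - 1) := by
        by_cases hv1 : v 1 = 0
        · exact hb0 v hv hv1
        · have hz : ∀ j, j ≠ 1 → v j = 0 := by
            intro j hj
            by_contra hne
            exact h4 (hammingNorm_ge_two v j 1 hj hne hv1)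
          have h := hzb (v 0) (v 1) (∑ i : Fin e, v i.succ.succ • β ^ (i : ℕ)) hv1
          have hg : (∑ i : Fin e, v i.succ.succ • β ^ (i : ℕ)) = 0 := by
            apply Finset.sum_eq_zero
            intro i _
            rw [hz _ (hss1 i), zero_smul]
          have h6 : qchar (ZMod p) (fstar (-((v 1)⁻¹ • ∑ i : Fin e, v i.succ.succ • β ^ (i : ℕ)))
              + ((v 1)⁻¹ * v 0 + 1)) = 1 := by
            rw [hg, hz 0 h10.symm, smul_zero, neg_zero, hf0]
            simp [qchar]
          rw [h6, hS1] at h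
          zify
          rw [h]
          have : (0 : ℤ) ≤ (p : ℤ) ^ ((e - 1) / 2) := by positivity
          linarith
      omega
  · have heq : dualCode C' = Set.range (fun w : Fq → ZMod p =>
        (Sum.elim (fun j => - ∑ d, w d * G2 j d) w : Fin (e + 2) ⊕ Fq → ZMod p)) := by
      ext u
      rw [hdual]
      constructor
      · intro h
        refine ⟨fun d => u (Sum.inr d), ?_⟩
        funext x
        rcases x with x | x
        · simp [h x]
        · simp
      · rintro ⟨w, rfl⟩ j
        simp
    have hinj : Function.Injective (fun w : Fq → ZMod p =>
        (Sum.elim (fun j => - ∑ d, w d * G2 j d) w : Fin (e + 2) ⊕ Fq → ZMod p)) := by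
      intro v w h
      funext j
      exact congrFun h (Sum.inr j)
    rw [heq, Nat.card_range_of_injective hinj]
    simp [hcq]
  · rw [isMinDist_iff]
    constructor
    · refine ⟨Sum.elim (fun j => - G2 j 0) (Pi.single 0 1), ?_, ?_, ?_⟩
      · rw [hdual]
        intro j
        simp [Pi.single_apply]
      · intro h
        have := congrFun h (Sum.inr 0)
        simp at this
      · rw [hammingNorm_elim]
        simp only [Sum.elim_inl, Sum.elim_inr]
        have h1 : hammingNorm (fun j => - G2 j 0) = 2 := by
          refine Eq.trans ?_ (Finset.card_pair h10.symm)
          rw [hammingNorm]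
          congr 1
          ext i
          simp only [Finset.mem_filter, Finset.mem_univ, true_and, Finset.mem_insert,
            Finset.mem_singleton]
          refine Fin.cases ?_ (fun i => ?_) i
          · simp [hG0]
          · refine Fin.cases ?_ (fun i => ?_) i
            · have := hG1 0
              rw [hRF.map_zero] at this
              simp [this]
            · simp [hGs, hss1]
        have h2 : hammingNorm (fun i => (Pi.single 0 1 : Fq → ZMod p) i) = 1 := by
          rw [hammingNorm, Finset.card_eq_one]
          exact ⟨0, by ext x; simp [Pi.single_apply]⟩
        rw [h1, h2]
    · intro u hu hu0
      rw [hdual] at hu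
      rw [hammingNorm_elim]
      set w : Fq → ZMod p := fun d => u (Sum.inr d) with hw
      have hw0 : w ≠ 0 := by
        intro h
        apply hu0
        funext x
        rcases x with x | x
        · rw [hu x]
          simp only [Pi.zero_apply, neg_eq_zero]
          apply Finset.sum_eq_zero
          intro d _
          have : u (Sum.inr d) = 0 := congrFun h d
          rw [this, zero_mul]
        · exact congrFun h x
      have hw1 : 1 ≤ hammingNorm w := hammingNorm_pos_iff.2 hw0
      by_cases hw3 : 3 ≤ hammingNorm w
      · omega
      have hcases : hammingNorm w = 1 ∨ hammingNorm w = 2 := by omega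
      rcases hcases with h1 | h2
      · rw [hammingNorm, Finset.card_eq_one] at h1
        obtain ⟨d, hd⟩ := h1
        have hmem : ∀ x, w x ≠ 0 ↔ x = d := by
          intro x
          have := Finset.ext_iff.1 hd x
          simpa using this
        have hu' : ∀ j, u (Sum.inl j) = - (w d * G2 j d) := by
          intro j
          rw [hu j, Finset.sum_eq_single d]
          · intro b _ hb
            have : w b = 0 := by
              by_contra h; exact hb ((hmem b).1 h)
            change w b * _ = 0
            rw [this, zero_mul]
          · simp
        have hwd : w d ≠ 0 := (hmem d).2 rfl
        have hc0 : u (Sum.inl 0) ≠ 0 := by rw [hu', hG0]; simpa using hwd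
        have : 2 ≤ hammingNorm (fun i => u (Sum.inl i)) := by
          by_cases hd0 : d = 0
          · apply hammingNorm_ge_two (fun i => u (Sum.inl i)) 0 1 h10.symm hc0
            rw [hu', hG1, hd0, hRF.map_zero]
            rw [hd0] at hwd
            simpa using hwd
          · obtain ⟨i, hi⟩ : ∃ i : Fin e, Algebra.trace (ZMod p) Fq (β ^ (i : ℕ) * d) ≠ 0 := by
              by_contra! h
              exact hd0 (trace_zero p e Fq hcq β hβ d h)
            apply hammingNorm_ge_two (fun i => u (Sum.inl i)) 0 i.succ.succ (hss i).symm hc0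
            rw [hu', hGs]
            simpa using ⟨hwd, hi⟩
        omega
      · have h2' := h2
        rw [hammingNorm, Finset.card_eq_two] at h2'
        obtain ⟨d, d', hdd, hd⟩ := h2'
        have hmem : ∀ x, w x ≠ 0 ↔ x = d ∨ x = d' := by
          intro x
          have := Finset.ext_iff.1 hd x
          simpa using this
        have hu' : ∀ j, u (Sum.inl j) = - (w d * G2 j d + w d' * G2 j d') := by
          intro j
          rw [hu j, ← Finset.sum_pair (f := fun d => w d * G2 j d) hdd]
          congr 1
          symm
          apply Finset.sum_subset (Finset.subset_univ _)
          intro x _ hx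
          have : w x = 0 := by
            by_contra h
            apply hx
            simpa using (hmem x).1 h
          change w x * _ = 0
          rw [this, zero_mul]
        have hwd : w d ≠ 0 := (hmem d).2 (Or.inl rfl)
        have hne : (fun i => u (Sum.inl i)) ≠ 0 := by
          intro hz
          have hz' : ∀ j, w d * G2 j d + w d' * G2 j d' = 0 := by
            intro j
            have : u (Sum.inl j) = 0 := congrFun hz j
            rw [hu'] at this
            exact neg_eq_zero.1 this
          have z0 := hz' 0
          rw [hG0, hG0] at z0
          apply hdd
          rw [← sub_eq_zero]
          apply trace_zero p e Fq hcq β hβ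
          intro i
          have z1 := hz' i.succ.succ
          rw [hGs, hGs] at z1
          rw [mul_sub, map_sub]
          apply mul_left_cancel₀ hwd
          rw [mul_zero]
          linear_combination z1 - Algebra.trace (ZMod p) Fq (β ^ (i : ℕ) * d') * z0
        have := hammingNorm_pos_iff.2 hne
        omega
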